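/- arXiv:1102.0874 — 2 statements merged into one kernel-verified Lean document; each statement's English description precedes it below -/
import Mathlib

section
/- Let a finite 2-colored sequence of n points have b major and w minor points with Δ := b − w ≥ 0, and let r be the number of runs of major points (maximal intervals of major points). If n ≥ k, r ≤ k and Δ ≤ k for an integer k, then the major points can be covered by a set D of exactly k pairwise disjoint bodies such that d₀₀ − d₁₁ = Δ, where d₀₀ (d₁₁) is the number of bodies in D with no head and no tail (with both head and tail), and the bodies of D together cover all major points. -/
/-- The number of runs of major (`true`) points of a chain, given as the number of
positions where a maximal interval of major points starts. -/
def countRuns (C : List Bool) : ℕ :=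
  ((List.range C.length).filter
    (fun i => decide (C.getD i false = true ∧ (i = 0 ∨ C.getD (i - 1) false = false)))).length

/-- A body of the chain `C`: a nonempty interval (given by its first and last
positions) all of whose inner points are major (`true`). -/
def IsBody (C : List Bool) (p : ℕ × ℕ) : Prop :=
  p.1 ≤ p.2 ∧ p.2 < C.length ∧ ∀ i, p.1 < i → i < p.2 → C.getD i false = true

/-- The number of major endpoints of an interval minus one, that is, `1`, `0` or `-1`. -/
def endBalance (C : List Bool) (p : ℕ × ℕ) : ℤ :=
  (if C.getD p.1 false = true then 1 else 0) + (if C.getD p.2 false = true then 1 else 0) - 1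

/-- `L` lists, from left to right, disjoint bodies of `C` covering all major points. -/
structure IsBodyCover (C : List Bool) (L : List (ℕ × ℕ)) : Prop where
  isBody : ∀ p ∈ L, IsBody C p
  pairwise : L.Pairwise (fun p q => p.2 < q.1)
  covers : ∀ i, i < C.length → C.getD i false = true → ∃ p ∈ L, p.1 ≤ i ∧ i ≤ p.2

/-- `C` has a cover by `k` disjoint bodies of total balance `e`. -/
def HasCover (C : List Bool) (k : ℕ) (e : ℤ) : Prop :=
  ∃ L, IsBodyCover C L ∧ L.length = k ∧ (L.map (endBalance C)).sum = e

/-- Translate all intervals of a list by `d`. -/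
def shiftIntervals (d : ℕ) (L : List (ℕ × ℕ)) : List (ℕ × ℕ) :=
  L.map fun p => (p.1 + d, p.2 + d)

theorem getD_append_add (X C : List Bool) (i : ℕ) :
    (X ++ C).getD (i + X.length) false = C.getD i false := by
  rw [List.getD_append_right _ _ _ _ (by omega)]
  simp

theorem mem_shiftIntervals {d : ℕ} {L : List (ℕ × ℕ)} {p : ℕ × ℕ} :
    p ∈ shiftIntervals d L ↔ ∃ q ∈ L, p = (q.1 + d, q.2 + d) := by
  simp [shiftIntervals, eq_comm]

theorem isBody_append {X C : List Bool} {p : ℕ × ℕ} (h : IsBody C p) :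
    IsBody (X ++ C) (p.1 + X.length, p.2 + X.length) := by
  obtain ⟨h₁, h₂, h₃⟩ := h
  refine ⟨by simpa using h₁, by simp; omega, fun i hi hi' => ?_⟩
  dsimp only at hi hi'
  obtain ⟨j, rfl⟩ : ∃ j, i = j + X.length := ⟨i - X.length, by omega⟩
  rw [getD_append_add]
  exact h₃ j (by omega) (by omega)

theorem pairwise_shiftIntervals {d : ℕ} {L : List (ℕ × ℕ)}
    (h : L.Pairwise (fun p q => p.2 < q.1)) :
    (shiftIntervals d L).Pairwise (fun p q => p.2 < q.1) := by
  rw [shiftIntervals, List.pairwise_map]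
  exact h.imp (by simp)

theorem sum_endBalance_shiftIntervals (X C : List Bool) (L : List (ℕ × ℕ)) :
    ((shiftIntervals X.length L).map (endBalance (X ++ C))).sum =
      (L.map (endBalance C)).sum := by
  simp only [shiftIntervals, List.map_map]
  congr 2
  funext p
  simp only [Function.comp, endBalance, getD_append_add]

theorem covers_shiftIntervals {X C : List Bool} {L : List (ℕ × ℕ)} (h : IsBodyCover C L)
    {i : ℕ} (hi : i < (X ++ C).length) (hX : X.length ≤ i)
    (ht : (X ++ C).getD i false = true) :
    ∃ p ∈ shiftIntervals X.length L, p.1 ≤ i ∧ i ≤ p.2 := by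
  obtain ⟨j, rfl⟩ : ∃ j, i = j + X.length := ⟨i - X.length, by omega⟩
  rw [getD_append_add] at ht
  obtain ⟨p, hp, h₁, h₂⟩ := h.covers j (by simp at hi; omega) ht
  exact ⟨_, mem_shiftIntervals.2 ⟨p, hp, rfl⟩, by simpa using h₁, by simpa using h₂⟩

theorem hasCover_nil : HasCover [] 0 0 :=
  ⟨[], ⟨by simp, by simp, by simp⟩, rfl, rfl⟩

/-- Leave a new leftmost minor point uncovered. -/
theorem HasCover.skip {C : List Bool} {k : ℕ} {e : ℤ} (h : HasCover C k e) :
    HasCover (false :: C) k e := by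
  obtain ⟨L, hL, hk, he⟩ := h
  refine ⟨shiftIntervals 1 L, ⟨?_, pairwise_shiftIntervals hL.pairwise, ?_⟩,
    by simpa [shiftIntervals] using hk, ?_⟩
  · intro p hp
    obtain ⟨q, hq, rfl⟩ := mem_shiftIntervals.1 hp
    exact isBody_append (X := [false]) (hL.isBody q hq)
  · intro i hi ht
    refine covers_shiftIntervals (X := [false]) hL hi ?_ ht
    rcases i with _ | i
    · simp at ht
    · simp
  · rw [← he]
    exact sum_endBalance_shiftIntervals [false] C L

/-- Prepend a word forming a single body. -/
theorem HasCover.prepend {C : List Bool} {k : ℕ} {e : ℤ} (h : HasCover C k e)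
    (X : List Bool) (m : ℕ) (hm : X.length = m + 1) (hX : IsBody (X ++ C) (0, m)) :
    HasCover (X ++ C) (k + 1) (endBalance (X ++ C) (0, m) + e) := by
  obtain ⟨L, hL, hk, he⟩ := h
  refine ⟨(0, m) :: shiftIntervals X.length L, ⟨?_, ?_, ?_⟩,
    by simpa [shiftIntervals] using hk, ?_⟩
  · intro p hp
    rcases List.mem_cons.1 hp with rfl | hp
    · exact hX
    · obtain ⟨q, hq, rfl⟩ := mem_shiftIntervals.1 hp
      exact isBody_append (hL.isBody q hq)
  · refine List.pairwise_cons.2 ⟨fun p hp => ?_, pairwise_shiftIntervals hL.pairwise⟩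
    obtain ⟨q, hq, rfl⟩ := mem_shiftIntervals.1 hp
    dsimp only
    omega
  · intro i hi ht
    by_cases him : i ≤ m
    · exact ⟨(0, m), by simp, by simp, him⟩
    · obtain ⟨p, hp, hpi⟩ := covers_shiftIntervals hL hi (by omega) ht
      exact ⟨p, List.mem_cons_of_mem _ hp, hpi⟩
  · rw [List.map_cons, List.sum_cons, sum_endBalance_shiftIntervals, he]

/-- Make a new leftmost point a body of its own. -/
theorem HasCover.single {C : List Bool} {k : ℕ} {e : ℤ} (h : HasCover C k e) (x : Bool) :
    HasCover (x :: C) (k + 1) (e + if x = true then 1 else -1) := by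
  have := h.prepend [x] 0 rfl ⟨le_rfl, by simp, fun i hi hi' => by dsimp only at hi hi'; omega⟩
  rw [List.singleton_append] at this
  convert this using 1
  cases x <;> simp [endBalance, add_comm]

/-- Prepend a body formed by a major point followed by a minor point. -/
theorem HasCover.major_minor {C : List Bool} {k : ℕ} {e : ℤ} (h : HasCover C k e) :
    HasCover (true :: false :: C) (k + 1) e := by
  have := h.prepend [true, false] 1 rfl
    ⟨by simp, by simp, fun i hi hi' => by dsimp only at hi hi'; omega⟩
  simpa [endBalance] using this

/-- Extend to the left the body containing the leftmost major point. -/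
theorem HasCover.extend {C : List Bool} {k : ℕ} {e : ℤ} (h : HasCover (true :: C) k e)
    (x : Bool) : HasCover (x :: true :: C) k (e + if x = true then 0 else -1) := by
  obtain ⟨L, hL, hk, he⟩ := h
  obtain ⟨p, hp, hp₀, -⟩ := hL.covers 0 (by simp) rfl
  obtain ⟨j, L, rfl⟩ : ∃ j L', L = (0, j) :: L' := by
    rcases L with _ | ⟨⟨q₁, q₂⟩, L⟩
    · simp at hp
    · refine ⟨q₂, L, ?_⟩
      rcases List.mem_cons.1 hp with rfl | hp
      · simp only [Nat.le_zero] at hp₀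
        rw [hp₀]
      · have := (List.pairwise_cons.1 hL.pairwise).1 p hp
        dsimp only at this
        omega
  obtain ⟨hp₁, hp₂⟩ := List.pairwise_cons.1 hL.pairwise
  obtain ⟨-, hb₂, hb₃⟩ := hL.isBody (0, j) (by simp)
  refine ⟨(0, j + 1) :: shiftIntervals 1 L, ⟨?_, ?_, ?_⟩,
    by simpa [shiftIntervals] using hk, ?_⟩
  · intro q hq
    rcases List.mem_cons.1 hq with rfl | hq
    · refine ⟨by simp, by simpa using hb₂, fun i hi hi' => ?_⟩
      dsimp only at hi hi'
      rcases i with _ | _ | i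
      · omega
      · simp
      · exact hb₃ (i + 1) (by simp) (by simpa using hi')
    · obtain ⟨p, hp, rfl⟩ := mem_shiftIntervals.1 hq
      exact isBody_append (X := [x]) (hL.isBody p (List.mem_cons_of_mem _ hp))
  · refine List.pairwise_cons.2 ⟨fun q hq => ?_, pairwise_shiftIntervals hp₂⟩
    obtain ⟨p, hp, rfl⟩ := mem_shiftIntervals.1 hq
    simpa using hp₁ p hp
  · intro i hi ht
    rcases i with _ | i
    · exact ⟨(0, j + 1), by simp, by simp, by simp⟩
    · obtain ⟨q, hq, h₁, h₂⟩ := hL.covers i (by simpa using hi) ht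
      rcases List.mem_cons.1 hq with rfl | hq
      · exact ⟨(0, j + 1), by simp, by simp, by simpa using h₂⟩
      · exact ⟨_, List.mem_cons_of_mem _ (mem_shiftIntervals.2 ⟨q, hq, rfl⟩),
          by simpa using h₁, by simpa using h₂⟩
  · have hs := sum_endBalance_shiftIntervals [x] (true :: C) L
    simp only [List.length_singleton, List.singleton_append] at hs
    rw [List.map_cons, List.sum_cons, hs, ← he]
    cases x
    · simp [endBalance]
      ring
    · simp [endBalance]

/-- The number of runs of major points starting in `C` when `C` is preceded by a point
of color `p`. -/
def runsAfter (p : Bool) : List Bool → ℕ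
  | [] => 0
  | x :: C => (if x = true ∧ p = false then 1 else 0) + runsAfter x C

theorem card_run_starts_eq_runsAfter (p : Bool) (C : List Bool) :
    ((List.range C.length).filter
      (fun i => decide (C.getD i false = true ∧ (p :: C).getD i false = false))).length =
      runsAfter p C := by
  induction C generalizing p with
  | nil => rfl
  | cons x C ih =>
    rw [List.length_cons, List.range_succ_eq_map, List.filter_cons, List.filter_map, runsAfter,
      ← ih x]
    have : ((fun i => decide ((x :: C).getD i false = true ∧
        (p :: x :: C).getD i false = false)) ∘ Nat.succ) =
        fun i => decide (C.getD i false = true ∧ (x :: C).getD i false = false) := by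
      funext i
      simp
    rw [this]
    cases x <;> cases p <;> simp [Nat.add_comm]

theorem countRuns_eq_runsAfter (C : List Bool) : countRuns C = runsAfter false C := by
  rw [← card_run_starts_eq_runsAfter, countRuns]
  congr 2
  funext i
  rcases i with _ | i <;> simp

/-- The number of minor points having a major neighbor. -/
def slots : List Bool → ℕ
  | [] => 0
  | [true] => 0
  | true :: true :: C => slots (true :: C)
  | true :: false :: C => slots C + 1
  | [false] => 0
  | false :: true :: C => slots (true :: C) + 1
  | false :: false :: C => slots (false :: C)

theorem slots_bounds (C : List Bool) :
    runsAfter false C ≤ C.count true ∧ slots C ≤ C.count false ∧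
      min (runsAfter false C) (C.count false) ≤ slots C ∧
      runsAfter false C ≤ C.count false + 1 ∧
      (0 < C.count true → 0 < runsAfter false C) ∧
      (C.head? ≠ some true → runsAfter false C ≤ slots C) := by
  induction C using slots.induct <;>
    simp_all [slots, runsAfter] <;> omega

/-- A cover by `t` bodies containing major points, with a total of `s` heads and tails, and
`a` minor singletons. -/
theorem hasCover_of_le_slots (C : List Bool) (a t s : ℕ) (hr : runsAfter false C ≤ t)
    (hb : t ≤ C.count true) (hs : s ≤ slots C) (hw : a + s ≤ C.count false) :
    HasCover C (a + t) (t - a - s) := by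
  have major {C : List Bool} {a t s : ℕ} (h : HasCover C (a + t) (t - a - s)) :
      HasCover (true :: C) (a + (t + 1)) ((t + 1 : ℕ) - a - s) := by
    convert h.single true using 1
    · ring
    · push_cast
      rw [if_pos rfl]
      ring
  have minor {C : List Bool} {a t s : ℕ} (h : HasCover C (a + t) (t - a - s)) :
      HasCover (false :: C) (a + 1 + t) (t - (a + 1 : ℕ) - s) := by
    convert h.single false using 1
    · ring
    · simp
      ring
  have extend {C : List Bool} {a t s : ℕ} (h : HasCover (true :: C) (a + t) (t - a - s)) :
      HasCover (true :: true :: C) (a + t) (t - a - s) := by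
    simpa using h.extend true
  have attach {C : List Bool} {a t s : ℕ} (h : HasCover (true :: C) (a + t) (t - a - s)) :
      HasCover (false :: true :: C) (a + t) (t - a - (s + 1 : ℕ)) := by
    convert h.extend false using 1
    simp
    ring
  have major_minor {C : List Bool} {a t s : ℕ} (h : HasCover C (a + t) (t - a - s)) :
      HasCover (true :: false :: C) (a + (t + 1)) ((t + 1 : ℕ) - a - (s + 1 : ℕ)) := by
    convert h.major_minor using 1
    · ring
    · push_cast
      ring
  induction C using slots.induct generalizing a t s with
  | case1 =>
    simp [slots] at hb hs hw
    obtain ⟨rfl, rfl, rfl⟩ : a = 0 ∧ t = 0 ∧ s = 0 := by omega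
    exact hasCover_nil
  | case2 =>
    simp [slots, runsAfter] at hr hb hs hw
    obtain ⟨rfl, rfl, rfl⟩ : a = 0 ∧ t = 1 ∧ s = 0 := by omega
    exact major (t := 0) hasCover_nil
  | case3 C ih =>
    have := (slots_bounds (true :: C)).1
    simp [slots, runsAfter] at hr hb hs hw ih this
    by_cases htb : t ≤ C.count true + 1
    · exact extend (ih a t s hr htb hs hw)
    · obtain ⟨t, rfl⟩ : ∃ t', t = t' + 1 := ⟨t - 1, by omega⟩
      exact major (ih a t s (by omega) (by omega) hs hw)
  | case4 C ih =>
    simp [slots, runsAfter] at hr hb hs hw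
    obtain ⟨t, rfl⟩ : ∃ t', t = t' + 1 := ⟨t - 1, by omega⟩
    rcases s with _ | s
    · rcases a with _ | a
      · exact major (ih 0 t 0 (by omega) (by omega) (by omega) (by omega)).skip
      · exact major (minor (ih a t 0 (by omega) (by omega) (by omega) (by omega)))
    · exact major_minor (ih a t s (by omega) (by omega) (by omega) (by omega))
  | case5 =>
    simp [slots] at hb hs hw
    obtain ⟨rfl, rfl⟩ : t = 0 ∧ s = 0 := by omega
    obtain rfl | rfl : a = 0 ∨ a = 1 := by omega
    · exact hasCover_nil.skip
    · exact minor (a := 0) hasCover_nil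
  | case6 C ih =>
    simp [slots, runsAfter] at hr hb hs hw ih
    rcases s with _ | s
    · rcases a with _ | a
      · exact (ih 0 t 0 (by omega) (by omega) (by omega) (by omega)).skip
      · exact minor (ih a t 0 (by omega) (by omega) (by omega) (by omega))
    · exact attach (ih a t s (by omega) (by omega) (by omega) (by omega))
  | case7 C ih =>
    have := (slots_bounds (false :: C)).2.1
    simp [slots, runsAfter] at hr hb hs hw ih this
    by_cases haw : a + s ≤ C.count false + 1
    · exact (ih a t s hr hb hs haw).skip
    · obtain ⟨a, rfl⟩ : ∃ a', a = a' + 1 := ⟨a - 1, by omega⟩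
      exact minor (ih a t s hr hb hs (by omega))

theorem sum_endBalance (C : List Bool) (D : Finset (ℕ × ℕ)) :
    ∑ p ∈ D, endBalance C p =
      ((D.filter (fun p => C.getD p.1 false = true ∧ C.getD p.2 false = true)).card : ℤ)
        - ((D.filter (fun p => C.getD p.1 false = false ∧ C.getD p.2 false = false)).card : ℤ) := by
  rw [Finset.natCast_card_filter, Finset.natCast_card_filter, ← Finset.sum_sub_distrib]
  refine Finset.sum_congr rfl fun p _ => ?_
  rw [endBalance]
  cases C.getD p.1 false <;> cases C.getD p.2 false <;> simp

theorem hasCover_of_countRuns_le {C : List Bool} {k : ℕ}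
    (hΔnonneg : C.count false ≤ C.count true) (hn : k ≤ C.length) (hr : countRuns C ≤ k)
    (hΔk : C.count true - C.count false ≤ k) :
    HasCover C k ((C.count true : ℤ) - C.count false) := by
  obtain ⟨h₁, h₂, h₃, h₄, h₅, -⟩ := slots_bounds C
  have hlen : C.count true + C.count false = C.length := List.count_true_add_count_false C
  rw [countRuns_eq_runsAfter] at hr
  set b := C.count true
  set w := C.count false
  obtain ⟨a, ha⟩ : ∃ a, a = min (k - runsAfter false C) ((k - (b - w)) / 2) := ⟨_, rfl⟩
  have := hasCover_of_le_slots C a (k - a) (k - (b - w) - 2 * a) (by omega) (by omega)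
    (by omega) (by omega)
  convert this using 1 <;> omega

/-- Let a 2-colored chain `C` (`true` = major, `false` = minor) have
`b` major and `w` minor points with `Δ = b - w ≥ 0`, and `r` runs of major points.
If `|C| ≥ k`, `r ≤ k` and `Δ ≤ k`, then there are exactly `k` pairwise disjoint
bodies covering all major points such that `d₀₀ - d₁₁ = Δ`, where `d₀₀` (`d₁₁`)
counts the bodies with both endpoints major (resp. both endpoints minor). -/
theorem cover_by_k_bodies (C : List Bool) (k : ℕ)
    (hΔnonneg : C.count false ≤ C.count true)
    (hn : k ≤ C.length)
    (hr : countRuns C ≤ k)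
    (hΔk : C.count true - C.count false ≤ k) :
    ∃ D : Finset (ℕ × ℕ),
      D.card = k ∧
      (∀ p ∈ D, IsBody C p) ∧
      (∀ p ∈ D, ∀ q ∈ D, p ≠ q → p.2 < q.1 ∨ q.2 < p.1) ∧
      (∀ i, i < C.length → C.getD i false = true → ∃ p ∈ D, p.1 ≤ i ∧ i ≤ p.2) ∧
      ((D.filter (fun p => C.getD p.1 false = true ∧ C.getD p.2 false = true)).card : ℤ)
          - ((D.filter (fun p => C.getD p.1 false = false ∧ C.getD p.2 false = false)).card : ℤ)
        = (C.count true : ℤ) - (C.count false : ℤ) := by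
  obtain ⟨L, hL, hk, he⟩ := hasCover_of_countRuns_le hΔnonneg hn hr hΔk
  have hnd : L.Nodup := hL.pairwise.imp_of_mem fun {p q} hp _ hpq heq => by
    have := (hL.isBody p hp).1
    subst heq
    omega
  refine ⟨L.toFinset, by rw [List.toFinset_card_of_nodup hnd, hk], ?_, ?_, ?_, ?_⟩
  · simpa using hL.isBody
  · intro p hp q hq hpq
    rw [List.mem_toFinset] at hp hq
    have : Std.Symm fun p q : ℕ × ℕ => p.2 < q.1 ∨ q.2 < p.1 := ⟨fun _ _ => Or.symm⟩
    exact (hL.pairwise.imp (S := fun p q => p.2 < q.1 ∨ q.2 < p.1) Or.inl).forall hp hq hpq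
  · simpa only [List.mem_toFinset] using hL.covers
  · rw [← sum_endBalance, List.sum_toFinset _ hnd, he]
end

section
/- If G is a bipartite planar graph on at least 5 vertices all of whose faces in every planar drawing are quadrilaterals (a quadrangulation), then for every set S of |V(G)| points in general position in the plane there exists a 2-coloring of S compatible with some proper 2-coloring of G such that G admits no straight-line plane embedding on S mapping each vertex to a distinct point of its color. -/
/-- The straight-line drawing `f` of `G` is plane (non-crossing): vertices go to
distinct points, two edges sharing no endpoint are drawn as disjoint segments, and
two edges sharing exactly one endpoint meet only in the image of that endpoint. -/
def IsPlaneDrawing {V : Type*} (G : SimpleGraph V) (f : V → ℝ × ℝ) : Prop :=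
  Function.Injective f ∧
    (∀ u v x y : V, G.Adj u v → G.Adj x y → u ≠ x → u ≠ y → v ≠ x → v ≠ y →
      segment ℝ (f u) (f v) ∩ segment ℝ (f x) (f y) = ∅) ∧
    (∀ u v w : V, G.Adj u v → G.Adj u w → v ≠ w →
      segment ℝ (f u) (f v) ∩ segment ℝ (f u) (f w) = {f u})

/-- The cost of a gap of the sweep line whose bounding edges start at `x` and `y`. -/
def gapWeight {V : Type*} [DecidableEq V] (c : V → Bool) (x y : V) : ℕ :=
  if x = y then 0 else if c x = c y then 2 else 1

/-- The total cost of the gaps between consecutive entries of a list. -/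
def totalWeight {V : Type*} [DecidableEq V] (c : V → Bool) : List V → ℕ
  | [] => 0
  | [_] => 0
  | x :: y :: l => gapWeight c x y + totalWeight c (y :: l)

section Weight

lemma Bool.eq_of_ne_of_ne {x y z : Bool} (hx : x ≠ z) (hy : y ≠ z) : x = y :=
  (Bool.eq_not.2 hx).trans (Bool.eq_not.2 hy).symm

variable {V : Type*} [DecidableEq V] {c : V → Bool}

lemma gapWeight_self (x : V) : gapWeight c x x = 0 := by simp [gapWeight]

lemma gapWeight_le_two (x y : V) : gapWeight c x y ≤ 2 := by
  unfold gapWeight; split_ifs <;> simp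

lemma gapWeight_of_color_ne {x y : V} (h : c x ≠ c y) : gapWeight c x y = 1 := by
  have : x ≠ y := by rintro rfl; exact h rfl
  simp [gapWeight, h, this]

lemma gapWeight_of_color_eq {x y : V} (hxy : x ≠ y) (h : c x = c y) : gapWeight c x y = 2 := by
  simp [gapWeight, h, hxy]

lemma one_le_gapWeight {x y : V} (hxy : x ≠ y) : 1 ≤ gapWeight c x y := by
  unfold gapWeight; split_ifs <;> simp_all

lemma gapWeight_comm (x y : V) : gapWeight c x y = gapWeight c y x := by
  simp [gapWeight, eq_comm]

lemma gapWeight_le_add_one (x : V) {y v : V} (h : c y ≠ c v) :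
    gapWeight c x v ≤ gapWeight c x y + 1 := by
  rcases eq_or_ne x y with rfl | hxy
  · simp [gapWeight_of_color_ne h]
  · have := one_le_gapWeight (c := c) hxy
    have := gapWeight_le_two (c := c) x v
    omega

lemma totalWeight_append_cons (X : List V) (x : V) (Q : List V) :
    totalWeight c (X ++ x :: Q) = totalWeight c (X ++ [x]) + totalWeight c (x :: Q) := by
  induction X with
  | nil => simp [totalWeight]
  | cons a X ih =>
    cases X with
    | nil => simp [totalWeight]
    | cons d X => simp only [List.cons_append, totalWeight] at ih ⊢; omega

lemma totalWeight_le_cons (x : V) (Z : List V) :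
    totalWeight c Z ≤ totalWeight c (x :: Z) := by
  cases Z <;> simp [totalWeight]

lemma totalWeight_cons_le (x : V) (Z : List V) :
    totalWeight c (x :: Z) ≤ totalWeight c Z + 2 := by
  cases Z with
  | nil => simp [totalWeight]
  | cons z Z => simp only [totalWeight]; have := gapWeight_le_two (c := c) x z; omega

lemma totalWeight_cons_le_cons {v y : V} (h : c y ≠ c v) (Z : List V) :
    totalWeight c (v :: Z) ≤ totalWeight c (y :: Z) + 1 := by
  cases Z with
  | nil => simp [totalWeight]
  | cons z Z =>
    simp only [totalWeight]
    have := gapWeight_le_add_one (c := c) z h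
    rw [gapWeight_comm z v, gapWeight_comm z y] at this
    omega

lemma totalWeight_replicate_append (v : V) (r : ℕ) (Z : List V) :
    totalWeight c (List.replicate (r + 1) v ++ Z) = totalWeight c (v :: Z) := by
  induction r with
  | zero => simp
  | succ r ih =>
    rw [List.replicate_succ, List.cons_append, ← ih, List.replicate_succ, List.cons_append]
    simp [totalWeight, gapWeight_self]

/-- Distinct vertices of the same color, all adjacent to a common vertex that gets closed off. -/
lemma totalWeight_cons_append_of_nodup (y : V) (Y Z : List V) (hY : (y :: Y).Nodup)
    (hc : ∀ z ∈ Y, c z = c y) :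
    ∃ x ∈ y :: Y, totalWeight c (y :: Y ++ Z) = 2 * Y.length + totalWeight c (x :: Z) := by
  induction Y generalizing y with
  | nil => exact ⟨y, by simp, by simp⟩
  | cons d Y ih =>
    obtain ⟨x, hx, h⟩ := ih d (List.nodup_cons.1 hY).2 (fun z hz => by
      rw [hc z (by simp [hz]), hc d (by simp)])
    refine ⟨x, by simp_all, ?_⟩
    have hyd : y ≠ d := by rintro rfl; simp at hY
    simp only [List.cons_append, totalWeight, List.length_cons] at h ⊢
    rw [h, gapWeight_of_color_eq hyd (hc d (by simp)).symm]
    ring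

/-- Sweeping over a vertex `v` replaces the left neighbours `Y` of `v` by copies of `v`. -/
lemma totalWeight_step (X : List V) (x v : V) (Y Z : List V) (r : ℕ) (hY : Y.Nodup)
    (hc : ∀ y ∈ Y, c y ≠ c v) :
    totalWeight c (X ++ x :: (List.replicate r v ++ Z)) + 2 * Y.length ≤
      totalWeight c (X ++ x :: (Y ++ Z)) + 4 := by
  rw [totalWeight_append_cons, totalWeight_append_cons X x (Y ++ Z)]
  suffices totalWeight c (x :: (List.replicate r v ++ Z)) + 2 * Y.length ≤
      totalWeight c (x :: (Y ++ Z)) + 4 by omega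
  have h2 := gapWeight_le_two (c := c)
  cases Y with
  | nil =>
    have h3 := totalWeight_cons_le (c := c) x (List.replicate r v ++ Z)
    have h4 := totalWeight_le_cons (c := c) x Z
    cases r with
    | zero => simp
    | succ r =>
      rw [totalWeight_replicate_append] at h3
      have := totalWeight_cons_le (c := c) v Z
      simp only [List.nil_append, List.length_nil]
      omega
  | cons y Y =>
    obtain ⟨w, hw, h⟩ := totalWeight_cons_append_of_nodup (c := c) y Y Z hY (fun z hz =>
      Bool.eq_of_ne_of_ne (hc z (by simp [hz])) (hc y (by simp)))
    have hl : totalWeight c (x :: (y :: Y ++ Z)) =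
      gapWeight c x y + totalWeight c (y :: Y ++ Z) := rfl
    rw [hl, h, List.length_cons]
    have hy := hc y (by simp)
    cases r with
    | zero =>
      have := totalWeight_cons_le (c := c) x Z
      have := totalWeight_le_cons (c := c) w Z
      simp only [List.replicate_zero, List.nil_append]
      omega
    | succ r =>
      have h5 : totalWeight c (x :: (List.replicate (r + 1) v ++ Z)) =
        gapWeight c x v + totalWeight c (v :: Z) := by
        rw [← totalWeight_replicate_append v r Z]; rfl
      rw [h5]
      have := gapWeight_le_add_one (c := c) x hy
      have := totalWeight_cons_le_cons (hc w hw) Z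
      omega

/-- The variant of `totalWeight_step` for a vertex `v` that is adjacent to the apex `b`. -/
lemma totalWeight_step_apex (b v : V) (Y Z : List V) (r : ℕ) (hY : Y.Nodup)
    (hc : ∀ y ∈ Y, c y ≠ c v) (hb : c b ≠ c v) (hbY : b ∉ Y) (hbZ : b ∉ Z) :
    totalWeight c (b :: (List.replicate r v ++ Z)) + 2 * (Y.length + 1) ≤
      totalWeight c (b :: (Y ++ Z)) + 4 := by
  have hbv := gapWeight_of_color_ne hb
  have h5 (r) : totalWeight c (b :: (List.replicate (r + 1) v ++ Z)) =
      1 + totalWeight c (v :: Z) := by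
    rw [← totalWeight_replicate_append v r Z]
    exact congrArg (· + totalWeight c (List.replicate (r + 1) v ++ Z)) hbv
  cases Y with
  | nil =>
    cases r with
    | zero => simp
    | succ r =>
      rw [h5]
      cases Z with
      | nil => simp [totalWeight]
      | cons z Z =>
        have := gapWeight_le_two (c := c) v z
        have := one_le_gapWeight (c := c) (x := b) (y := z) (by rintro rfl; simp at hbZ)
        simp only [List.nil_append, List.length_nil, totalWeight]
        omega
  | cons y Y =>
    obtain ⟨w, hw, h⟩ := totalWeight_cons_append_of_nodup (c := c) y Y Z hY (fun z hz =>
      Bool.eq_of_ne_of_ne (hc z (by simp [hz])) (hc y (by simp)))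
    have hl : totalWeight c (b :: (y :: Y ++ Z)) =
      gapWeight c b y + totalWeight c (y :: Y ++ Z) := rfl
    have hy := hc y (by simp)
    rw [hl, h, List.length_cons, gapWeight_of_color_eq (by rintro rfl; simp at hbY)
      (Bool.eq_of_ne_of_ne hb hy)]
    cases r with
    | zero =>
      have := totalWeight_cons_le (c := c) b Z
      have := totalWeight_le_cons (c := c) w Z
      simp only [List.replicate_zero, List.nil_append]
      omega
    | succ r =>
      rw [h5]
      have := totalWeight_cons_le_cons (hc w hw) Z
      omega

/-- The last vertex of the sweep closes all remaining gaps. -/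
lemma two_mul_length_le_totalWeight (b v : V) (Y : List V) (hY : Y.Nodup)
    (hc : ∀ y ∈ Y, c y ≠ c v) (hb : c b = c v) :
    2 * Y.length ≤ totalWeight c (b :: Y) + 1 := by
  cases Y with
  | nil => simp
  | cons y Y =>
    obtain ⟨w, hw, h⟩ := totalWeight_cons_append_of_nodup (c := c) y Y [] hY (fun z hz =>
      Bool.eq_of_ne_of_ne (hc z (by simp [hz])) (hc y (by simp)))
    rw [List.append_nil] at h
    have hy := hc y (by simp)
    have hl : totalWeight c (b :: y :: Y) = gapWeight c b y + totalWeight c (y :: Y) := rfl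
    rw [hl, h, gapWeight_of_color_ne (by rw [hb]; exact hy.symm), List.length_cons]
    simp only [totalWeight]
    omega

end Weight

/-- The linear interpolation between `(t e.1, s e.1)` and `(t e.2, s e.2)`. -/
noncomputable def sweepHeight {V : Type*} (t s : V → ℝ) (e : V × V) (τ : ℝ) : ℝ :=
  s e.1 + (τ - t e.1) * ((s e.2 - s e.1) / (t e.2 - t e.1))

/-- `e` is an edge of `G - b`, directed along the sweep. -/
def IsSweepEdge {V : Type*} (G : SimpleGraph V) (b : V) (t : V → ℝ) (e : V × V) : Prop :=
  G.Adj e.1 e.2 ∧ e.1 ≠ b ∧ e.2 ≠ b ∧ t e.1 < t e.2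

/-- A plane drawing in which the vertex `b` is placed at infinity, below everything else:
the other vertices have coordinates `(t v, s v)`, and the edge from `b` to `v` is the vertical
ray below `v`. -/
structure IsSweepDrawing {V : Type*} (G : SimpleGraph V) (b : V) (t s : V → ℝ) : Prop where
  inj : ∀ u v, u ≠ b → v ≠ b → t u = t v → u = v
  height_ne : ∀ e e', IsSweepEdge G b t e → IsSweepEdge G b t e' → e ≠ e' → ∀ τ,
    t e.1 < τ → τ < t e.2 → t e'.1 < τ → τ < t e'.2 → sweepHeight t s e τ ≠ sweepHeight t s e' τ
  height_ne_vertex : ∀ e, IsSweepEdge G b t e → ∀ w, w ≠ b → t e.1 < t w → t w < t e.2 →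
    sweepHeight t s e (t w) ≠ s w
  vertex_lt_height : ∀ e, IsSweepEdge G b t e → ∀ w, G.Adj b w → t e.1 < t w → t w < t e.2 →
    s w < sweepHeight t s e (t w)

/-- `L` lists the edges that meet the vertical line at `τ`, from bottom to top. -/
structure IsSweepState {V : Type*} (G : SimpleGraph V) (b : V) (t s : V → ℝ) (τ : ℝ)
    (L : List (V × V)) : Prop where
  mem_iff : ∀ e, e ∈ L ↔ IsSweepEdge G b t e ∧ t e.1 < τ ∧ τ < t e.2
  sorted : L.Pairwise fun e e' => sweepHeight t s e τ < sweepHeight t s e' τ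

lemma exists_affine_eq_zero {p q x y : ℝ} (hx : p + q * x < 0) (hy : 0 ≤ p + q * y) :
    ∃ z, p + q * z = 0 ∧ (x < z ∧ z ≤ y ∨ y ≤ z ∧ z < x) := by
  have hq : q ≠ 0 := by rintro rfl; linarith
  have hz : p + q * (-p / q) = 0 := by field_simp; ring
  refine ⟨-p / q, hz, ?_⟩
  generalize -p / q = z at hz
  rcases lt_or_gt_of_ne hq with h | h
  · right; constructor <;> nlinarith
  · left; constructor <;> nlinarith

lemma List.eq_filter_append_filter_append_filter {α : Type*} (k : α → ℝ) (m : ℝ) (L : List α)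
    (h : L.Pairwise fun a a' => k a ≤ k a') :
    L = L.filter (fun a => k a < m) ++ L.filter (fun a => k a = m) ++
      L.filter (fun a => m < k a) := by
  induction L with
  | nil => simp
  | cons a L ih =>
    obtain ⟨ha, hL⟩ := List.pairwise_cons.1 h
    have ih := ih hL
    rcases lt_trichotomy (k a) m with hm | hm | hm
    · rw [List.filter_cons_of_pos (by simpa), List.filter_cons_of_neg (by simp [hm.ne]),
        List.filter_cons_of_neg (by simp [hm.le])]
      simpa using ih
    · have : L.filter (fun a => k a < m) = [] :=
        List.filter_eq_nil_iff.2 fun x hx => by simpa using hm ▸ ha x hx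
      rw [this] at ih
      rw [List.filter_cons_of_neg (by simp [hm]), List.filter_cons_of_pos (by simpa),
        List.filter_cons_of_neg (by simp [hm]), this]
      simpa using ih
    · have h1 : L.filter (fun a => k a < m) = [] :=
        List.filter_eq_nil_iff.2 fun x hx => by simpa using hm.le.trans (ha x hx)
      have h2 : L.filter (fun a => k a = m) = [] :=
        List.filter_eq_nil_iff.2 fun x hx => by simpa using (hm.trans_le (ha x hx)).ne'
      rw [h1, h2] at ih
      rw [List.filter_cons_of_neg (by simp [hm.le]), List.filter_cons_of_neg (by simp [hm.ne']),
        List.filter_cons_of_pos (by simpa), h1, h2]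
      simpa using ih

lemma exists_list_pairwise_lt {α : Type*} (A : Finset α) (k : α → ℝ) (hk : Set.InjOn k A) :
    ∃ R : List α, (∀ a, a ∈ R ↔ a ∈ A) ∧ R.Pairwise fun a a' => k a < k a' := by
  classical
  revert hk
  refine Finset.induction_on_max_value k A (fun _ => ⟨[], by simp, by simp⟩) ?_
  · intro a A ha hmax ih hk
    obtain ⟨R, hR, hp⟩ := ih (hk.mono (by simp))
    refine ⟨R ++ [a], fun x => by simp [hR, or_comm], ?_⟩
    refine List.pairwise_append.2 ⟨hp, by simp, fun x hx y hy => ?_⟩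
    rw [hR] at hx
    obtain rfl : y = a := by simpa using hy
    refine lt_of_le_of_ne (hmax x hx) fun he => ha ?_
    have := hk (by simp [hx]) (by simp) he
    exact this ▸ hx

section Sweep

variable {V : Type*} {G : SimpleGraph V} {b : V} {t s : V → ℝ}

lemma sweepHeight_fst (e : V × V) : sweepHeight t s e (t e.1) = s e.1 := by
  simp [sweepHeight]

lemma sweepHeight_snd {e : V × V} (h : t e.1 < t e.2) : sweepHeight t s e (t e.2) = s e.2 := by
  have : t e.2 - t e.1 ≠ 0 := by linarith
  unfold sweepHeight
  field_simp
  ring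

namespace IsSweepDrawing

/-- The vertical order of two edges does not change along the sweep. -/
lemma height_lt_of_lt (D : IsSweepDrawing G b t s) {e e' : V × V} (he : IsSweepEdge G b t e)
    (he' : IsSweepEdge G b t e') {σ τ : ℝ} (hσ : sweepHeight t s e σ < sweepHeight t s e' σ)
    (h1 : t e.1 ≤ σ) (h2 : σ ≤ t e.2) (h1' : t e'.1 ≤ σ) (h2' : σ ≤ t e'.2)
    (h3 : t e.1 < τ) (h4 : τ < t e.2) (h3' : t e'.1 < τ) (h4' : τ < t e'.2) :
    sweepHeight t s e τ < sweepHeight t s e' τ := by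
  by_contra! hτ
  have hne : e ≠ e' := by rintro rfl; exact lt_irrefl _ hσ
  let q (e : V × V) := (s e.2 - s e.1) / (t e.2 - t e.1)
  let p (e : V × V) := s e.1 - t e.1 * q e
  have key (e : V × V) (x : ℝ) : sweepHeight t s e x = p e + q e * x := by
    simp only [sweepHeight, p, q]; ring
  rw [key, key] at hσ hτ
  obtain ⟨z, hz, hz'⟩ := exists_affine_eq_zero (p := p e - p e') (q := q e - q e') (x := σ) (y := τ)
    (by linarith) (by linarith)
  refine D.height_ne e e' he he' hne z ?_ ?_ ?_ ?_ (by rw [key, key]; linarith) <;>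
    rcases hz' with ⟨_, _⟩ | ⟨_, _⟩ <;> linarith

lemma height_le_of_lt (D : IsSweepDrawing G b t s) {e e' : V × V} (he : IsSweepEdge G b t e)
    (he' : IsSweepEdge G b t e') {σ τ : ℝ} (hσ : sweepHeight t s e σ < sweepHeight t s e' σ)
    (h1 : t e.1 < σ) (h2 : σ < t e.2) (h1' : t e'.1 < σ) (h2' : σ < t e'.2)
    (h3 : t e.1 ≤ τ) (h4 : τ ≤ t e.2) (h3' : t e'.1 ≤ τ) (h4' : τ ≤ t e'.2) :
    sweepHeight t s e τ ≤ sweepHeight t s e' τ := by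
  by_contra! hτ
  have := D.height_lt_of_lt he' he hτ h3' h4' h3 h4 h1' h2' h1 h2
  exact lt_asymm hσ this

/-- How the list of edges meeting the sweep line changes when it passes over a vertex `v`. -/
lemma exists_step [Fintype V] (D : IsSweepDrawing G b t s) {τ τ' : ℝ} {v : V} (hv : v ≠ b)
    (hτ : τ < t v) (hτ' : t v < τ') (hw : ∀ w, w ≠ b → w ≠ v → t w < τ ∨ τ' < t w)
    {L : List (V × V)} (hL : IsSweepState G b t s τ L) :
    ∃ A B C R : List (V × V), L = A ++ B ++ C ∧ IsSweepState G b t s τ' (A ++ R ++ C) ∧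
      (∀ e, e ∈ B ↔ IsSweepEdge G b t e ∧ e.2 = v) ∧ (∀ e ∈ R, e.1 = v) ∧
      (G.Adj b v → A = []) := by
  classical
  have hact (e) (he : e ∈ L) : IsSweepEdge G b t e ∧ t e.1 < t v ∧ t v ≤ t e.2 := by
    obtain ⟨h1, h2, h3⟩ := (hL.mem_iff e).1 he
    refine ⟨h1, h2.trans hτ, ?_⟩
    by_cases h : e.2 = v
    · rw [h]
    · rcases hw e.2 h1.2.2.1 h <;> linarith
  have hend (e) (he : e ∈ L) (h : sweepHeight t s e (t v) ≠ s v) : τ' < t e.2 := by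
    obtain ⟨h1, h2, h3⟩ := hact e he
    have h4 : e.2 ≠ v := by
      rintro rfl; exact h (sweepHeight_snd h1.2.2.2)
    rcases hw e.2 h1.2.2.1 h4 with h | h
    · linarith
    · exact h
  have hle : L.Pairwise fun e e' => sweepHeight t s e (t v) ≤ sweepHeight t s e' (t v) := by
    refine hL.sorted.imp_of_mem fun {e e'} he he' h => ?_
    obtain ⟨h1, h2, h3⟩ := (hL.mem_iff e).1 he
    obtain ⟨h1', h2', h3'⟩ := (hL.mem_iff e').1 he'
    obtain ⟨-, h4, h5⟩ := hact e he
    obtain ⟨-, h4', h5'⟩ := hact e' he'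
    exact D.height_le_of_lt h1 h1' h h2 h3 h2' h3' h4.le h5 h4'.le h5'
  obtain ⟨R, hR, hRs⟩ := exists_list_pairwise_lt
    (Finset.univ.filter fun e : V × V => IsSweepEdge G b t e ∧ e.1 = v)
    (fun e => sweepHeight t s e τ') (by
      intro e he e' he' h
      simp only [Finset.coe_filter, Finset.mem_univ, true_and, Set.mem_ofPred_eq] at he he'
      by_contra hne
      have h1 (e : V × V) (he : IsSweepEdge G b t e ∧ e.1 = v) : τ' < t e.2 := by
        have h2 : e.2 ≠ v := by rintro h; have := he.1.2.2.2; rw [h, he.2] at this; linarith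
        have := he.1.2.2.2
        rw [he.2] at this
        rcases hw e.2 he.1.2.2.1 h2 <;> linarith
      exact D.height_ne e e' he.1 he'.1 hne τ' (he.2 ▸ hτ') (h1 e he) (he'.2 ▸ hτ') (h1 e' he') h)
  simp only [Finset.mem_filter, Finset.mem_univ, true_and] at hR
  have hRend (e) (he : e ∈ R) : τ' < t e.2 := by
    obtain ⟨h, h1⟩ := (hR e).1 he
    have h3 := h.2.2.2
    have h2 : e.2 ≠ v := by intro h'; rw [h', h1] at h3; linarith
    rw [h1] at h3
    rcases hw e.2 h.2.2.1 h2 <;> linarith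
  refine ⟨_, _, _, R, List.eq_filter_append_filter_append_filter _ (s v) L hle, ⟨?_, ?_⟩, ?_,
    fun e he => ((hR e).1 he).2, ?_⟩
  · intro e
    simp only [List.mem_append, List.mem_filter, decide_eq_true_eq]
    constructor
    · rintro ((⟨h, h1⟩ | h) | ⟨h, h1⟩)
      · exact ⟨(hact e h).1, (hact e h).2.1.trans hτ', hend e h h1.ne⟩
      · exact ⟨((hR e).1 h).1, by rw [((hR e).1 h).2]; exact hτ', hRend e h⟩
      · exact ⟨(hact e h).1, (hact e h).2.1.trans hτ', hend e h h1.ne'⟩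
    · rintro ⟨h, h1, h2⟩
      by_cases hev : e.1 = v
      · exact Or.inl (Or.inr ((hR e).2 ⟨h, hev⟩))
      · have h3 : t e.1 < τ := by rcases hw e.1 h.2.1 hev <;> linarith
        have h4 : e ∈ L := (hL.mem_iff e).2 ⟨h, h3, by linarith⟩
        rcases lt_or_gt_of_ne
          (D.height_ne_vertex e h v hv (by linarith) (by linarith)) with h5 | h5
        · exact Or.inl (Or.inl ⟨h4, h5⟩)
        · exact Or.inr ⟨h4, h5⟩
  · have hsub : (L.filter (fun a => sweepHeight t s a (t v) < s v) ++
        L.filter (fun a => s v < sweepHeight t s a (t v))).Pairwise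
        fun e e' => sweepHeight t s e τ' < sweepHeight t s e' τ' := by
      have := List.eq_filter_append_filter_append_filter _ (s v) L hle
      have hs : (L.filter (fun a => sweepHeight t s a (t v) < s v) ++
        L.filter (fun a => s v < sweepHeight t s a (t v))).Sublist L := by
        conv_rhs => rw [this]
        exact List.Sublist.append (List.sublist_append_left _ _) (List.Sublist.refl _)
      refine (hL.sorted.sublist hs).imp_of_mem fun {e e'} he he' h => ?_
      have hmem (e) (he : e ∈ L.filter (fun a => sweepHeight t s a (t v) < s v) ++
        L.filter (fun a => s v < sweepHeight t s a (t v))) : e ∈ L ∧ τ' < t e.2 := by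
        simp only [List.mem_append, List.mem_filter, decide_eq_true_eq] at he
        rcases he with ⟨h, h1⟩ | ⟨h, h1⟩
        · exact ⟨h, hend e h h1.ne⟩
        · exact ⟨h, hend e h h1.ne'⟩
      obtain ⟨h1, h2, h3⟩ := (hL.mem_iff e).1 (hmem e he).1
      obtain ⟨h1', h2', h3'⟩ := (hL.mem_iff e').1 (hmem e' he').1
      exact D.height_lt_of_lt h1 h1' h h2.le h3.le h2'.le h3'.le (by linarith) (hmem e he).2
        (by linarith) (hmem e' he').2
    obtain ⟨hA, hC, hAC⟩ := List.pairwise_append.1 hsub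
    have hRv (e) (he : e ∈ R) : sweepHeight t s e (t v) = s v := by
      rw [← ((hR e).1 he).2, sweepHeight_fst]
    refine List.pairwise_append.2 ⟨List.pairwise_append.2 ⟨hA, hRs, ?_⟩, hC, ?_⟩
    · intro e he e' he'
      simp only [List.mem_filter, decide_eq_true_eq] at he
      obtain ⟨h1, h2, h3⟩ := hact e he.1
      obtain ⟨h1', h2'⟩ := (hR e').1 he'
      have h4 := hend e he.1 he.2.ne
      have h4' := hRend e' he'
      refine D.height_lt_of_lt h1 h1' (σ := t v) (by rw [hRv e' he']; exact he.2) h2.le h3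
        (by rw [h2']) ?_ (by linarith) h4 (by rw [h2']; exact hτ') h4'
      linarith
    · intro e he e' he'
      rcases List.mem_append.1 he with he | he
      · exact hAC e he e' he'
      simp only [List.mem_filter, decide_eq_true_eq] at he'
      obtain ⟨h1, h2, h3⟩ := hact e' he'.1
      obtain ⟨h1', h2'⟩ := (hR e).1 he
      have h4 := hend e' he'.1 he'.2.ne'
      have h4' := hRend e he
      refine D.height_lt_of_lt h1' h1 (σ := t v) (by rw [hRv e he]; exact he'.2)
        (by rw [h2']) ?_ h2.le h3 (by rw [h2']; exact hτ') h4' (by linarith) h4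
      linarith
  · intro e
    simp only [List.mem_filter, decide_eq_true_eq]
    constructor
    · rintro ⟨h, h1⟩
      obtain ⟨h2, h3, h4⟩ := hact e h
      refine ⟨h2, ?_⟩
      rcases h4.eq_or_lt with h4 | h4
      · exact (D.inj v e.2 hv h2.2.2.1 h4).symm
      · exact absurd h1 (D.height_ne_vertex e h2 v hv h3 h4)
    · rintro ⟨h, rfl⟩
      have h1 := h.2.2.2
      have h2 : e.1 ≠ e.2 := h.1.ne
      refine ⟨(hL.mem_iff e).2 ⟨h, ?_, hτ⟩, sweepHeight_snd h1⟩
      rcases hw e.1 h.2.1 h2 <;> linarith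
  · intro hbv
    refine List.filter_eq_nil_iff.2 fun e he => ?_
    obtain ⟨h2, h3, h4⟩ := hact e he
    simp only [decide_eq_true_eq, not_lt]
    rcases h4.eq_or_lt with h4 | h4
    · rw [D.inj v e.2 hv h2.2.2.1 h4, sweepHeight_snd h2.2.2.2]
    · exact (D.vertex_lt_height e h2 v hbv h3 h4).le

end IsSweepDrawing

open scoped Classical in
/-- The number of neighbours of `v` that are swept over before `v`, the apex `b` included. -/
noncomputable def sweepDegree [Fintype V] (G : SimpleGraph V) (b : V) (t : V → ℝ) (v : V) : ℕ :=
  (Finset.univ.filter fun u => G.Adj u v ∧ (u = b ∨ t u < t v)).card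

lemma sweepDegree_le_length [Fintype V] {v : V} (l : List V)
    (h : ∀ u, G.Adj u v → (u = b ∨ t u < t v) → u ∈ l) : sweepDegree G b t v ≤ l.length := by
  classical
  refine le_trans (Finset.card_le_card (t := l.toFinset) fun u hu => ?_) (List.toFinset_card_le l)
  simp only [Finset.mem_filter, Finset.mem_univ, true_and] at hu
  exact List.mem_toFinset.2 (h u hu.1 hu.2)

lemma card_edgeFinset_le_sum_sweepDegree [Fintype V] [DecidableEq V] [DecidableRel G.Adj]
    (hinj : ∀ u v, u ≠ b → v ≠ b → t u = t v → u = v) :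
    G.edgeFinset.card ≤ ∑ v with v ≠ b, sweepDegree G b t v := by
  classical
  simp only [sweepDegree]
  rw [← Finset.card_sigma]
  refine Finset.card_le_card_of_surjOn (fun p => s(p.1, p.2)) ?_
  intro e he
  induction e with | _ u v
  have hadj : G.Adj u v := by simpa using he
  simp only [Set.mem_image, Finset.mem_coe, Finset.mem_sigma, Finset.mem_filter, Finset.mem_univ,
    true_and, Sigma.exists]
  by_cases hv : v = b
  · exact ⟨u, v, ⟨by rw [← hv]; exact hadj.ne, hadj.symm, Or.inl hv⟩, rfl⟩
  by_cases hu : u = b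
  · exact ⟨v, u, ⟨hv, hadj, Or.inl hu⟩, Sym2.eq_swap⟩
  rcases lt_trichotomy (t u) (t v) with h | h | h
  · exact ⟨v, u, ⟨hv, hadj, Or.inr h⟩, Sym2.eq_swap⟩
  · exact absurd (hinj u v hu hv h) hadj.ne
  · exact ⟨u, v, ⟨hu, hadj.symm, Or.inr h⟩, rfl⟩

lemma exists_sweep_position [Fintype V] (b : V) (t : V → ℝ) (x : ℝ) :
    ∃ σ, σ < x ∧ ∀ w, w ≠ b → t w < x → t w < σ := by
  classical
  obtain ⟨σ, h1, h2⟩ := Finset.exists_between'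
    ((Finset.univ.filter fun w => w ≠ b ∧ t w < x).image t) {x} (by
      intro y hy z hz
      obtain ⟨w, hw, rfl⟩ := Finset.mem_image.1 hy
      rw [Finset.mem_singleton.1 hz]
      exact (Finset.mem_filter.1 hw).2.2)
  exact ⟨σ, h2 x (Finset.mem_singleton_self x), fun w hw hwx =>
    h1 _ (Finset.mem_image_of_mem t (by simp [hw, hwx]))⟩

namespace IsSweepState

lemma fst_ne {τ : ℝ} {L : List (V × V)} (hL : IsSweepState G b t s τ L) :
    b ∉ L.map Prod.fst := by
  intro h
  obtain ⟨e, he, rfl⟩ := List.mem_map.1 h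
  exact ((hL.mem_iff e).1 he).1.2.1 rfl

lemma nodup {τ : ℝ} {L : List (V × V)} (hL : IsSweepState G b t s τ L) : L.Nodup :=
  hL.sorted.imp fun h => by rintro rfl; exact lt_irrefl _ h

end IsSweepState

lemma nodup_map_fst_of_snd_eq {v : V} {B : List (V × V)} (hB : B.Nodup) (h : ∀ e ∈ B, e.2 = v) :
    (B.map Prod.fst).Nodup :=
  hB.map_on fun e he e' he' h1 => Prod.ext h1 ((h e he).trans (h e' he').symm)

namespace IsSweepDrawing

variable [Fintype V] [DecidableEq V] {c : V → Bool}

lemma exists_step_totalWeight (D : IsSweepDrawing G b t s) (hc : ∀ u v, G.Adj u v → c u ≠ c v)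
    {τ τ' : ℝ} {v : V} (hv : v ≠ b)
    (hτ : τ < t v) (hτ' : t v < τ') (hw : ∀ w, w ≠ b → w ≠ v → t w < τ ∨ τ' < t w)
    {L : List (V × V)} (hL : IsSweepState G b t s τ L) :
    ∃ L', IsSweepState G b t s τ' L' ∧
      totalWeight c (b :: L'.map Prod.fst) + 2 * sweepDegree G b t v ≤
        totalWeight c (b :: L.map Prod.fst) + 4 ∧
      (L = [] → totalWeight c (b :: L'.map Prod.fst) ≤ 2) := by
  obtain ⟨A, B, C, R, rfl, hL', hB, hR, hA⟩ := D.exists_step hv hτ hτ' hw hL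
  have hRrep : R.map Prod.fst = List.replicate R.length v := by
    rw [List.eq_replicate_iff]
    exact ⟨by simp, by simpa using fun a x h => hR (a, x) h⟩
  have hBn : (B.map Prod.fst).Nodup := nodup_map_fst_of_snd_eq (v := v)
    (hL.nodup.sublist ((List.sublist_append_right _ _).trans (List.sublist_append_left _ _)))
    fun e he => ((hB e).1 he).2
  have hBc : ∀ y ∈ B.map Prod.fst, c y ≠ c v := by
    intro y hy
    obtain ⟨e, he, rfl⟩ := List.mem_map.1 hy
    obtain ⟨h1, h2⟩ := (hB e).1 he
    exact h2 ▸ hc _ _ h1.1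
  have hBmem (u : V) (hu : G.Adj u v) (hub : u ≠ b) (h : t u < t v) : u ∈ B.map Prod.fst :=
    List.mem_map.2 ⟨(u, v), (hB _).2 ⟨⟨hu, hub, hv, h⟩, rfl⟩, rfl⟩
  refine ⟨_, hL', ?_, ?_⟩
  · by_cases hbv : G.Adj b v
    · obtain rfl := hA hbv
      have hb := hL.fst_ne
      simp only [List.nil_append, List.map_append, List.mem_append, not_or] at hb ⊢
      rw [hRrep]
      have h1 := totalWeight_step_apex b v (B.map Prod.fst) (C.map Prod.fst) R.length hBn hBc
        (hc _ _ hbv) hb.1 hb.2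
      have h2 : sweepDegree G b t v ≤ (b :: B.map Prod.fst).length :=
        sweepDegree_le_length _ fun u hu h => by
          by_cases hub : u = b
          · simp [hub]
          · exact List.mem_cons_of_mem _ (hBmem u hu hub (h.resolve_left hub))
      rw [List.length_cons] at h2
      omega
    · have h2 : sweepDegree G b t v ≤ (B.map Prod.fst).length :=
        sweepDegree_le_length _ fun u hu h => by
          have hub : u ≠ b := by rintro rfl; exact hbv hu
          exact hBmem u hu hub (h.resolve_left hub)
      simp only [List.map_append, hRrep]
      obtain ⟨X, x, hX⟩ : ∃ X x, b :: A.map Prod.fst = X ++ [x] :=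
        ⟨_, _, (List.dropLast_append_getLast (List.cons_ne_nil _ _)).symm⟩
      have h1 := totalWeight_step X x v (B.map Prod.fst) (C.map Prod.fst) R.length hBn hBc
      have h3 (Q : List V) : X ++ x :: Q = b :: (A.map Prod.fst ++ Q) := by
        rw [← List.cons_append, hX]; simp
      rw [h3, h3] at h1
      simp only [List.append_assoc]
      omega
  · intro h
    simp only [List.append_eq_nil_iff] at h
    obtain ⟨⟨rfl, rfl⟩, rfl⟩ := h
    simp only [List.nil_append, List.append_nil, hRrep]
    cases hr : R.length with
    | zero => simp [totalWeight]
    | succ r =>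
      refine (totalWeight_cons_le _ _).trans ?_
      have := totalWeight_replicate_append (c := c) v r []
      rw [List.append_nil] at this
      simp [this, totalWeight]

/-- The invariant of the sweep, for a sweep that starts in a vertex of the same color as the
apex. -/
lemma exists_state (D : IsSweepDrawing G b t s) (hc : ∀ u v, G.Adj u v → c u ≠ c v)
    {a : V} (hab : a ≠ b) (hca : c a = c b) (ha : ∀ w, w ≠ b → t a ≤ t w) (k : ℕ) :
    ∀ τ, (∀ w, w ≠ b → t w ≠ τ) → (Finset.univ.filter fun w => w ≠ b ∧ t w < τ).card = k →
    ∃ L, IsSweepState G b t s τ L ∧ (k = 0 → L = []) ∧ (k ≠ 0 →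
      2 * ∑ v with v ≠ b ∧ t v < τ, sweepDegree G b t v +
        totalWeight c (b :: L.map Prod.fst) + 2 ≤ 4 * k) := by
  induction k with
  | zero =>
    intro τ _ hk
    rw [Finset.card_eq_zero, Finset.filter_eq_empty_iff] at hk
    refine ⟨[], ⟨fun e => ?_, List.Pairwise.nil⟩, fun _ => rfl, fun h => absurd rfl h⟩
    simp only [List.not_mem_nil, false_iff]
    rintro ⟨h, h1, -⟩
    exact hk (Finset.mem_univ e.1) ⟨h.2.1, h1⟩
  | succ k ih =>
    intro τ hτ hk
    obtain ⟨v, hvP, hmax⟩ := Finset.exists_max_image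
      (Finset.univ.filter fun w => w ≠ b ∧ t w < τ) t (Finset.card_pos.1 (by omega))
    simp only [Finset.mem_filter, Finset.mem_univ, true_and] at hvP hmax
    obtain ⟨σ, hσ2, hσ1⟩ := exists_sweep_position b t (t v)
    have hlt (w) (hw : w ≠ b) (hwv : w ≠ v) (hwτ : t w < τ) : t w < t v :=
      lt_of_le_of_ne (hmax w ⟨hw, hwτ⟩) fun h => hwv (D.inj w v hw hvP.1 h)
    have hP : (Finset.univ.filter fun w => w ≠ b ∧ t w < τ) =
        insert v (Finset.univ.filter fun w => w ≠ b ∧ t w < σ) := by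
      ext w
      simp only [Finset.mem_filter, Finset.mem_univ, true_and, Finset.mem_insert]
      constructor
      · rintro ⟨h, h1⟩
        by_cases hwv : w = v
        · exact Or.inl hwv
        · exact Or.inr ⟨h, hσ1 w h (hlt w h hwv h1)⟩
      · rintro (rfl | ⟨h, h1⟩)
        · exact hvP
        · exact ⟨h, by linarith [hvP.2]⟩
    have hvn : v ∉ Finset.univ.filter fun w => w ≠ b ∧ t w < σ := by simp [hσ2.le]
    rw [hP, Finset.card_insert_of_notMem hvn] at hk
    have hne : ∀ w, w ≠ b → t w ≠ σ := by
      rintro w hw rfl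
      exact lt_irrefl _ (hσ1 w hw hσ2)
    obtain ⟨L, hL, hL0, hL1⟩ := ih σ hne (by omega)
    obtain ⟨L', hL', h1, h2⟩ := D.exists_step_totalWeight hc hvP.1 hσ2 hvP.2 (fun w hw hwv => by
      rcases lt_or_gt_of_ne (hτ w hw) with h | h
      · exact Or.inl (hσ1 w hw (hlt w hw hwv h))
      · exact Or.inr h) hL
    refine ⟨L', hL', by simp, fun _ => ?_⟩
    rw [hP, Finset.sum_insert hvn]
    rcases eq_or_ne k 0 with rfl | hk0
    · have h3 := h2 (hL0 rfl)
      have h4 : (Finset.univ.filter fun w => w ≠ b ∧ t w < σ) = ∅ :=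
        Finset.card_eq_zero.1 (by omega)
      have hva : a = v := by
        by_contra h
        have : a ∈ Finset.univ.filter fun w => w ≠ b ∧ t w < σ := by
          simpa [hab] using hσ1 a hab (lt_of_le_of_ne (ha v hvP.1) fun h' =>
            h (D.inj a v hab hvP.1 h'))
        simp [h4] at this
      have h5 : sweepDegree G b t v ≤ ([] : List V).length := by
        refine sweepDegree_le_length _ fun u hu h => ?_
        exfalso
        subst hva
        by_cases hub : u = b
        · exact hc u a hu (by rw [hub, hca])
        · exact absurd (ha u hub) (not_le.2 (h.resolve_left hub))
      rw [h4, Finset.sum_empty]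
      simp only [List.length_nil] at h5
      omega
    · have := hL1 hk0
      omega

/-- If the apex, the first and the last vertex of the sweep have the same color, then the graph
has at most `2 * n - 5` edges. -/
lemma two_mul_card_edgeFinset_add_nine_le [DecidableRel G.Adj] (D : IsSweepDrawing G b t s)
    (hc : ∀ u v, G.Adj u v → c u ≠ c v) {a d : V} (hab : a ≠ b) (hdb : d ≠ b) (had : a ≠ d)
    (hca : c a = c b) (hcd : c d = c b) (ha : ∀ w, w ≠ b → t a ≤ t w)
    (hd : ∀ w, w ≠ b → t w ≤ t d) : 2 * G.edgeFinset.card + 9 ≤ 4 * Fintype.card V := by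
  obtain ⟨σ, hσ2, hσ1⟩ := exists_sweep_position b t (t d)
  have hlt (w) (hw : w ≠ b) (hwd : w ≠ d) : t w < σ :=
    hσ1 w hw (lt_of_le_of_ne (hd w hw) fun h => hwd (D.inj w d hw hdb h))
  have hP : (Finset.univ.filter fun w => w ≠ b) =
      insert d (Finset.univ.filter fun w => w ≠ b ∧ t w < σ) := by
    ext w
    simp only [Finset.mem_filter, Finset.mem_univ, true_and, Finset.mem_insert]
    constructor
    · intro h
      by_cases hwd : w = d
      · exact Or.inl hwd
      · exact Or.inr ⟨h, hlt w h hwd⟩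
    · rintro (rfl | h)
      exacts [hdb, h.1]
  have hdn : d ∉ Finset.univ.filter fun w => w ≠ b ∧ t w < σ := by simp [hσ2.le]
  obtain ⟨L, hL, -, hL1⟩ := D.exists_state hc hab hca ha _ σ (by
    rintro w hw rfl
    exact lt_irrefl _ (hσ1 w hw hσ2)) rfl
  have hk : (Finset.univ.filter fun w => w ≠ b ∧ t w < σ).card ≠ 0 :=
    Finset.card_ne_zero.2 ⟨a, by simpa [hab] using hlt a hab had⟩
  have h1 := hL1 hk
  have h2 : (Finset.univ.filter fun w => w ≠ b).card + 1 = Fintype.card V := by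
    rw [Finset.filter_ne', Finset.card_erase_of_mem (Finset.mem_univ b), Finset.card_univ]
    have := Fintype.card_pos_iff.2 ⟨b⟩
    omega
  rw [hP, Finset.card_insert_of_notMem hdn] at h2
  have h3 := card_edgeFinset_le_sum_sweepDegree (G := G) D.inj
  rw [hP, Finset.sum_insert hdn] at h3
  have hsnd : ∀ e ∈ L, e.2 = d := by
    intro e he
    obtain ⟨h, -, h'⟩ := (hL.mem_iff e).1 he
    by_contra hed
    exact lt_asymm h' (hlt e.2 h.2.2.1 hed)
  have h4 := two_mul_length_le_totalWeight (c := c) b d (L.map Prod.fst)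
    (nodup_map_fst_of_snd_eq hL.nodup hsnd) (fun y hy => by
      obtain ⟨e, he, rfl⟩ := List.mem_map.1 hy
      exact hsnd e he ▸ hc _ _ ((hL.mem_iff e).1 he).1.1) hcd.symm
  have h5 : sweepDegree G b t d ≤ (L.map Prod.fst).length := by
    refine sweepDegree_le_length _ fun u hu h => ?_
    have hub : u ≠ b := by
      rintro rfl
      exact hc u d hu hcd.symm
    have hud := h.resolve_left hub
    exact List.mem_map.2 ⟨(u, d), (hL.mem_iff _).2
      ⟨⟨hu, hub, hdb, hud⟩, hσ1 u hub hud, hσ2⟩, rfl⟩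
  omega

end IsSweepDrawing

end Sweep

/-- The component of `B - p` along `B`, scaled by the length of `B`. -/
def apexDepth (B p : ℝ × ℝ) : ℝ := B.1 * (B.1 - p.1) + B.2 * (B.2 - p.2)

/-- The slope of the line through `B` and `p`, measured in the frame given by `B`. -/
noncomputable def apexSlope (B p : ℝ × ℝ) : ℝ :=
  (B.1 * (p.2 - B.2) - B.2 * (p.1 - B.1)) / apexDepth B p

/-- The second coordinate of the projective chart that sends `B` to infinity. -/
noncomputable def apexHeight (B p : ℝ × ℝ) : ℝ := -(apexDepth B p)⁻¹

/-- The inverse of the projective chart `(apexSlope B, apexHeight B)`. -/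
noncomputable def apexPoint (B : ℝ × ℝ) (τ σ : ℝ) : ℝ × ℝ :=
  (B.1 + (B.1 + τ * B.2) / (σ * (B.1 ^ 2 + B.2 ^ 2)),
    B.2 + (B.2 - τ * B.1) / (σ * (B.1 ^ 2 + B.2 ^ 2)))

section Apex

variable {B : ℝ × ℝ}

lemma apexDepth_pos {p : ℝ × ℝ} (hp : p ≠ B) (h : p.1 ^ 2 + p.2 ^ 2 ≤ B.1 ^ 2 + B.2 ^ 2) :
    0 < apexDepth B p := by
  have h1 : 0 < (B.1 - p.1) ^ 2 + (B.2 - p.2) ^ 2 := by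
    by_contra! h1
    refine hp (Prod.ext ?_ ?_) <;> nlinarith [sq_nonneg (B.1 - p.1), sq_nonneg (B.2 - p.2)]
  unfold apexDepth
  nlinarith

lemma sq_add_sq_ne_zero_of_apexDepth_pos {p : ℝ × ℝ} (hp : 0 < apexDepth B p) :
    B.1 ^ 2 + B.2 ^ 2 ≠ 0 := by
  intro h
  have h1 : B.1 = 0 := by nlinarith [sq_nonneg B.1, sq_nonneg B.2]
  have h2 : B.2 = 0 := by nlinarith [sq_nonneg B.1, sq_nonneg B.2]
  simp [apexDepth, h1, h2] at hp

lemma apexHeight_neg {p : ℝ × ℝ} (hp : 0 < apexDepth B p) : apexHeight B p < 0 := by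
  simpa [apexHeight] using hp

lemma apexPoint_apexSlope_apexHeight {p : ℝ × ℝ} (hp : 0 < apexDepth B p) :
    apexPoint B (apexSlope B p) (apexHeight B p) = p := by
  have hB := sq_add_sq_ne_zero_of_apexDepth_pos hp
  have h := hp.ne'
  refine Prod.ext ?_ ?_ <;>
    simp only [apexPoint, apexHeight, apexSlope, neg_mul, div_neg, ← sub_eq_add_neg] <;>
    field_simp <;> simp only [apexDepth] <;> ring

lemma apexSlope_apexPoint (hB : B.1 ^ 2 + B.2 ^ 2 ≠ 0) (τ : ℝ) {σ : ℝ} (hσ : σ ≠ 0) :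
    apexSlope B (apexPoint B τ σ) = τ := by
  have h1 : apexDepth B (apexPoint B τ σ) = -σ⁻¹ := by
    simp only [apexDepth, apexPoint]; field_simp; ring
  rw [apexSlope, h1]
  simp only [apexPoint]; field_simp; ring

lemma apexPoint_mem_segment (hB : B.1 ^ 2 + B.2 ^ 2 ≠ 0) {t t' x y α β : ℝ} (hx : x < 0)
    (hy : y < 0) (hα : 0 ≤ α) (hβ : 0 ≤ β) (hαβ : α + β = 1) :
    α * x + β * y < 0 ∧ apexPoint B (α * t + β * t') (α * x + β * y) ∈
      segment ℝ (apexPoint B t x) (apexPoint B t' y) := by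
  have h : α * x + β * y < 0 := by
    rcases hα.eq_or_lt with rfl | hα
    · simp_all
    · nlinarith [mul_neg_of_pos_of_neg hα hx]
  have h' := h.ne
  refine ⟨h, α * x / (α * x + β * y), β * y / (α * x + β * y),
    div_nonneg_of_nonpos (by nlinarith) h.le, div_nonneg_of_nonpos (by nlinarith) h.le, ?_, ?_⟩
  · rw [← add_div, div_self h']
  · have hx' := hx.ne
    have hy' := hy.ne
    obtain rfl : β = 1 - α := by linarith
    refine Prod.ext ?_ ?_ <;>
      simp only [apexPoint, Prod.fst_add, Prod.snd_add, Prod.smul_fst, Prod.smul_snd,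
        smul_eq_mul] <;> field_simp <;> ring

lemma apexPoint_mem_segment_apex {τ σ x : ℝ} (hσ : σ ≤ x) (hx : x < 0) :
    apexPoint B τ σ ∈ segment ℝ B (apexPoint B τ x) := by
  have hσ0 : σ < 0 := hσ.trans_lt hx
  have h1 : x / σ ≤ 1 := by rw [div_le_one_of_neg hσ0]; exact hσ
  refine ⟨1 - x / σ, x / σ, by linarith, div_nonneg_of_nonpos hx.le hσ0.le, by ring, ?_⟩
  have hx' := hx.ne
  have hσ' := hσ0.ne
  have key (z w : ℝ) : z / (σ * w) = x / σ * (z / (x * w)) := by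
    rcases eq_or_ne w 0 with rfl | hw
    · simp
    · field_simp
  refine Prod.ext ?_ ?_ <;>
    simp only [apexPoint, Prod.fst_add, Prod.snd_add, Prod.smul_fst, Prod.smul_snd,
      smul_eq_mul] <;> rw [key] <;> ring

lemma collinear_of_apexSlope_eq {p q : ℝ × ℝ} (hp : 0 < apexDepth B p) (hq : 0 < apexDepth B q)
    (h : apexSlope B p = apexSlope B q) : Collinear ℝ {B, p, q} := by
  rcases le_total (apexHeight B p) (apexHeight B q) with h1 | h1
  · have := apexPoint_mem_segment_apex (B := B) (τ := apexSlope B q) h1 (apexHeight_neg hq)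
    rw [apexPoint_apexSlope_apexHeight hq, ← h, apexPoint_apexSlope_apexHeight hp] at this
    exact (mem_segment_iff_wbtw.1 this).collinear
  · have := apexPoint_mem_segment_apex (B := B) (τ := apexSlope B p) h1 (apexHeight_neg hp)
    rw [apexPoint_apexSlope_apexHeight hp, h, apexPoint_apexSlope_apexHeight hq] at this
    have := (mem_segment_iff_wbtw.1 this).collinear
    rwa [Set.pair_comm] at this

end Apex

lemma IsPlaneDrawing.isSweepDrawing {V : Type*} {G : SimpleGraph V} {f : V → ℝ × ℝ}
    (hf : IsPlaneDrawing G f) {b : V} (hb : ∀ v ≠ b, 0 < apexDepth (f b) (f v))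
    (hgp : ∀ u v w, u ≠ v → u ≠ w → v ≠ w → ¬ Collinear ℝ {f u, f v, f w}) :
    IsSweepDrawing G b (fun v => apexSlope (f b) (f v)) (fun v => apexHeight (f b) (f v)) := by
  set t : V → ℝ := fun v => apexSlope (f b) (f v) with ht
  set s : V → ℝ := fun v => apexHeight (f b) (f v)
  have hpt (v) (hv : v ≠ b) : apexPoint (f b) (t v) (s v) = f v :=
    apexPoint_apexSlope_apexHeight (hb v hv)
  have hedge (e) (he : IsSweepEdge G b t e) (τ : ℝ) (h1 : t e.1 < τ) (h2 : τ < t e.2) :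
      sweepHeight t s e τ < 0 ∧
      apexPoint (f b) τ (sweepHeight t s e τ) ∈ segment ℝ (f e.1) (f e.2) := by
    obtain ⟨-, hu, hv, h⟩ := he
    have h3 : 0 < t e.2 - t e.1 := by linarith
    have key := apexPoint_mem_segment (sq_add_sq_ne_zero_of_apexDepth_pos (hb _ hu))
      (t := t e.1) (t' := t e.2) (x := s e.1) (y := s e.2)
      (α := (t e.2 - τ) / (t e.2 - t e.1)) (β := (τ - t e.1) / (t e.2 - t e.1))
      (apexHeight_neg (hb _ hu)) (apexHeight_neg (hb _ hv))
      (div_nonneg (by linarith) h3.le) (div_nonneg (by linarith) h3.le)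
      (by field_simp; ring)
    rw [hpt _ hu, hpt _ hv] at key
    convert key using 3
    · simp only [sweepHeight]; field_simp; ring
    · field_simp; ring
    · simp only [sweepHeight]; field_simp; ring
  have hvert (e) (he : IsSweepEdge G b t e) (τ : ℝ) (h1 : t e.1 < τ) (h2 : τ < t e.2) (w)
      (hw : apexPoint (f b) τ (sweepHeight t s e τ) = f w) : t w = τ := by
    simp only [ht]
    rw [← hw]
    exact apexSlope_apexPoint (sq_add_sq_ne_zero_of_apexDepth_pos (hb _ he.2.1)) τ
      (hedge e he τ h1 h2).1.ne
  obtain ⟨-, hdisj, hshare⟩ := hf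
  refine ⟨?_, ?_, ?_, ?_⟩
  · intro u v hu hv h
    by_contra huv
    exact hgp b u v hu.symm hv.symm huv (collinear_of_apexSlope_eq (hb u hu) (hb v hv) h)
  · rintro ⟨u, v⟩ ⟨x, y⟩ he he' hne τ h1 h2 h1' h2' heq
    obtain ⟨-, hP⟩ := hedge _ he τ h1 h2
    obtain ⟨-, hP'⟩ := hedge _ he' τ h1' h2'
    have hvu := hvert _ he τ h1 h2
    rw [← heq] at hP'
    simp only at *
    by_cases hux : u = x
    · subst hux
      have := hshare u v y he.1 he'.1 fun h => hne (by rw [h])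
      have hmem := this.subset ⟨hP, hP'⟩
      exact h1.ne (hvu u hmem)
    by_cases hvy : v = y
    · subst hvy
      have := hshare v u x he.1.symm he'.1.symm hux
      rw [segment_symm] at hP hP'
      have hmem := this.subset ⟨hP, hP'⟩
      exact h2.ne' (hvu v hmem)
    have huy : u ≠ y := by rintro rfl; exact lt_asymm h1 h2'
    have hvx : v ≠ x := by rintro rfl; exact lt_asymm h1' h2
    exact (hdisj u v x y he.1 he'.1 hux huy hvx hvy).subset ⟨hP, hP'⟩
  · intro e he w hw h1 h2 heq
    obtain ⟨-, hP⟩ := hedge e he _ h1 h2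
    rw [heq, hpt w hw] at hP
    exact hgp e.1 w e.2 (by rintro rfl; exact lt_irrefl _ h1) he.1.ne
      (by rintro rfl; exact lt_irrefl _ h2) (mem_segment_iff_wbtw.1 hP).collinear
  · intro e he w hbw h1 h2
    by_contra! hle
    obtain ⟨-, hP⟩ := hedge e he _ h1 h2
    have hw := hbw.ne.symm
    have hPw := apexPoint_mem_segment_apex (B := f b) (τ := t w) hle (apexHeight_neg (hb w hw))
    rw [hpt w hw] at hPw
    exact (hdisj e.1 e.2 b w he.1 hbw he.2.1 (by rintro rfl; exact lt_irrefl _ h1) he.2.2.1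
      (by rintro rfl; exact lt_irrefl _ h2)).subset ⟨hP, hPw⟩

/-- Let `G` be a bipartite planar quadrangulation on at least 5 vertices:
`G` is connected, properly 2-colorable, has a plane straight-line drawing, and has
`2|V| - 4` edges (Euler's formula characterization of a quadrangulation: every face of
every planar drawing is a quadrilateral). Then for every set `S` of `|V|` points in
general position there is a proper 2-coloring `c` of `G` and a compatible 2-coloring
`col` of `S` (the color classes have equal sizes) such that `G` has no straight-line
plane embedding on `S` mapping each vertex to a distinct point of its color. -/
theorem quadrangulation_not_embeddable {V : Type*} [Fintype V] [DecidableEq V]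
    (G : SimpleGraph V) [DecidableRel G.Adj]
    (hcard : 5 ≤ Fintype.card V)
    (hconn : G.Connected)
    (hbip : ∃ c : V → Bool, ∀ u v, G.Adj u v → c u ≠ c v)
    (hplanar : ∃ g : V → ℝ × ℝ, IsPlaneDrawing G g)
    (hquad : G.edgeFinset.card = 2 * Fintype.card V - 4)
    (S : Finset (ℝ × ℝ)) (hS : S.card = Fintype.card V)
    (hgp : ∀ p ∈ S, ∀ q ∈ S, ∀ r ∈ S, p ≠ q → p ≠ r → q ≠ r →
      ¬ Collinear ℝ ({p, q, r} : Set (ℝ × ℝ))) :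
    ∃ (c : V → Bool) (col : ℝ × ℝ → Bool),
      (∀ u v, G.Adj u v → c u ≠ c v) ∧
      (S.filter (fun p => col p = true)).card
        = (Finset.univ.filter (fun v => c v = true)).card ∧
      ¬ ∃ f : V → ℝ × ℝ, IsPlaneDrawing G f ∧ Set.range f = ↑S ∧
        ∀ v, col (f v) = c v := by
  classical
  suffices main : ∀ c : V → Bool, (∀ u v, G.Adj u v → c u ≠ c v) →
      3 ≤ (Finset.univ.filter fun v => c v = true).card →
      ∃ col : ℝ × ℝ → Bool, (S.filter (fun p => col p = true)).card
        = (Finset.univ.filter (fun v => c v = true)).card ∧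
      ¬ ∃ f : V → ℝ × ℝ, IsPlaneDrawing G f ∧ Set.range f = ↑S ∧ ∀ v, col (f v) = c v by
    obtain ⟨c, hc⟩ := hbip
    have hadd := Finset.card_filter_add_card_filter_not (s := (Finset.univ : Finset V))
      (fun v => c v = true)
    rw [Finset.card_univ] at hadd
    by_cases h3 : 3 ≤ (Finset.univ.filter fun v => c v = true).card
    · obtain ⟨col, h⟩ := main c hc h3
      exact ⟨c, col, hc, h⟩
    · have hc' : ∀ u v, G.Adj u v → (!c u) ≠ (!c v) := fun u v h => by simpa using hc u v h
      obtain ⟨col, h⟩ := main (fun v => !c v) hc' (by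
        have : (Finset.univ.filter fun v => (!c v) = true) =
          Finset.univ.filter fun v => ¬ c v = true := by simp
        rw [this]
        omega)
      exact ⟨_, col, hc', h⟩
  intro c hc h3
  obtain ⟨B, hB, hBmax⟩ := S.exists_max_image (fun p => p.1 ^ 2 + p.2 ^ 2)
    (Finset.card_pos.1 (by omega))
  have hS' : (S.erase B).card + 1 = S.card := Finset.card_erase_add_one hB
  obtain ⟨A, hA, hAmin⟩ := (S.erase B).exists_min_image (apexSlope B)
    (Finset.card_pos.1 (by omega))
  obtain ⟨C, hC, hCmax⟩ := (S.erase B).exists_max_image (apexSlope B)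
    (Finset.card_pos.1 (by omega))
  obtain ⟨K, hK, hKS, hKcard⟩ := Finset.exists_subsuperset_card_eq (s := {A, B, C}) (t := S)
    (n := (Finset.univ.filter fun v => c v = true).card) (by
      intro p hp
      simp only [Finset.mem_insert, Finset.mem_singleton] at hp
      rcases hp with rfl | rfl | rfl
      exacts [Finset.mem_of_mem_erase hA, hB, Finset.mem_of_mem_erase hC])
    (Finset.card_le_three.trans h3) (by rw [hS]; exact Finset.card_le_univ _)
  refine ⟨fun p => decide (p ∈ K), ?_, ?_⟩
  · simp only [decide_eq_true_eq, ← hKcard]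
    rw [Finset.filter_mem_eq_inter, Finset.inter_eq_right.2 hKS]
  rintro ⟨f, hf, hrange, hcol⟩
  have hfS (v) : f v ∈ S := by
    rw [← Finset.mem_coe, ← hrange]
    exact Set.mem_range_self v
  have hpre (p) (hp : p ∈ S) : ∃ v, f v = p := by
    rwa [← Finset.mem_coe, ← hrange] at hp
  obtain ⟨b, rfl⟩ := hpre B hB
  obtain ⟨a, rfl⟩ := hpre A (Finset.mem_of_mem_erase hA)
  obtain ⟨d, rfl⟩ := hpre C (Finset.mem_of_mem_erase hC)
  have hfne {u v : V} (h : u ≠ v) : f u ≠ f v := hf.1.ne h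
  have hab : a ≠ b := by rintro rfl; simp at hA
  have hdb : d ≠ b := by rintro rfl; simp at hC
  have hcK (v) (hv : f v ∈ ({f a, f b, f d} : Finset (ℝ × ℝ))) : c v = true := by
    rw [← hcol v]
    simpa using hK hv
  have D := hf.isSweepDrawing (b := b) (fun v hv => apexDepth_pos (hfne hv) (hBmax _ (hfS v)))
    fun u v w huv huw hvw =>
      hgp _ (hfS u) _ (hfS v) _ (hfS w) (hfne huv) (hfne huw) (hfne hvw)
  have ha (w) (hw : w ≠ b) : apexSlope (f b) (f a) ≤ apexSlope (f b) (f w) :=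
    hAmin _ (Finset.mem_erase.2 ⟨hfne hw, hfS w⟩)
  have hd (w) (hw : w ≠ b) : apexSlope (f b) (f w) ≤ apexSlope (f b) (f d) :=
    hCmax _ (Finset.mem_erase.2 ⟨hfne hw, hfS w⟩)
  have had : a ≠ d := by
    rintro rfl
    obtain ⟨w, hw⟩ : ∃ w, w ∉ ({a, b} : Finset V) := by
      by_contra! h
      have := Finset.card_le_card (fun w _ => h w : (Finset.univ : Finset V) ⊆ {a, b})
      rw [Finset.card_univ] at this
      have := Finset.card_le_two (a := a) (b := b)
      omega
    simp only [Finset.mem_insert, Finset.mem_singleton, not_or] at hw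
    exact hw.1 (D.inj w a hw.2 hab (le_antisymm (hd w hw.2) (ha w hw.2)))
  have hb := hcK b (by simp)
  have := D.two_mul_card_edgeFinset_add_nine_le hc hab hdb had ((hcK a (by simp)).trans hb.symm)
    ((hcK d (by simp)).trans hb.symm) ha hd
  omega
end
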